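/- arXiv:1902.10092 — 2 statements merged into one kernel-verified Lean document; each statement's English description precedes it below -/
import Mathlib

section
/- Let X be a Banach space and let F be either the collection of all normalized weakly null Schauder basic sequences in X, or (if X has a basis) the collection of all normalized block sequences in X. Then X admits a unique joint spreading model with respect to F if and only if X admits a unique asymptotic model with respect to F. -/
/-!
Both implications compare the two kinds of models through a common subsequence extraction. Given an
array of normalized sequences, iterated limits along a nonprincipal ultrafilter and a diagonal
choice produce a common subsequence generating an asymptotic model
(`exists_subseq_asymptoticModel`). A strict plegma, read in the order
`s_1(1) < ... < s_l(1) < s_1(2) < ...`, is just an increasing sequence, so the joint spreading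
models of an `l`-array are the asymptotic models of its periodic repetition
(`generatesJSM_of_periodic`). The only properties of the collection `F` that matter are that its
members are normalized and that it is closed under subsequences.

If joint spreading models are unique with constant `C`, the first `l` vectors of two asymptotic
models are, after passing to subsequences, the first vectors of joint spreading models of the first
`l` rows, hence `C`-equivalent. As the models are normalized, the two constants involved are at
most `C` for every `l`, and the models are equivalent.

Conversely, uniqueness of asymptotic models is automatically uniform
(`exists_uniform_of_uniqueAM`): arrays violating larger and larger constants, relative to a fixed
spreading model `ω`, can be merged into one array whose asymptotic model is not equivalent to `ω`.
The uniform constant passes to joint spreading models through periodic repetition.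
-/

open Filter Topology
open scoped ENNReal

noncomputable section

/-! ### Abstract Banach space notions -/

section Abstract

variable {X : Type*} [NormedAddCommGroup X] [NormedSpace ℝ X]

/-- A sequence is normalized if every term has norm one. -/
def Normalized (x : ℕ → X) : Prop := ∀ i, ‖x i‖ = 1

/-- A sequence is weakly null if it tends to `0` in the weak topology. -/
def WeaklyNull (x : ℕ → X) : Prop :=
  ∀ f : X →L[ℝ] ℝ, Tendsto (fun i => f (x i)) atTop (𝓝 (0 : ℝ))

end Abstract

/-- The ℓ₁ norm of finite coefficient vectors (the norms of finite linear
combinations of the unit vector basis of ℓ₁). -/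
def l1Norm : ∀ m : ℕ, (Fin m → ℝ) → ℝ := fun _ a => ∑ i, |a i|

/-- The sup norm of finite coefficient vectors (the norms of finite linear
combinations of the unit vector basis of c₀). -/
def supNorm : ∀ m : ℕ, (Fin m → ℝ) → ℝ := fun _ a => ⨆ i, |a i|

/-- The ℓ_p norm of finite coefficient vectors, `1 ≤ p < ∞`. -/
def lpNormFin (p : ℝ) : ∀ m : ℕ, (Fin m → ℝ) → ℝ := fun _ a => (∑ i, |a i| ^ p) ^ (1 / p)

/-- The ℓ_q norms of finite coefficient vectors, `q ∈ [1,∞]`, where `q = ∞`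
corresponds to `c₀`. -/
def finLqNorm (q : ℝ≥0∞) : ∀ m : ℕ, (Fin m → ℝ) → ℝ := fun m a =>
  if q = ⊤ then supNorm m a else lpNormFin q.toReal m a

/-- The family of seminorms `ν` (of finite combinations of a sequence in a seminormed
space) is `C`-equivalent to the family `μ`:  there are `A B > 0` with `A * B ≤ C` and
`(1/A) * μ ≤ ν ≤ B * μ`. -/
def NormFamEquiv (C : ℝ) (μ ν : ∀ m : ℕ, (Fin m → ℝ) → ℝ) : Prop :=
  ∃ A B : ℝ, 0 < A ∧ 0 < B ∧ A * B ≤ C ∧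
    ∀ (m : ℕ) (a : Fin m → ℝ), (1 / A) * μ m a ≤ ν m a ∧ ν m a ≤ B * μ m a

section Abstract2

variable {X : Type*} [NormedAddCommGroup X] [NormedSpace ℝ X]

/-- The sequence `x` generates the spreading model whose finite-combination
seminorms are given by the family `ν`. -/
def GeneratesSpreadingModel (x : ℕ → X) (ν : ∀ m : ℕ, (Fin m → ℝ) → ℝ) : Prop :=
  ∀ (m : ℕ) (a : Fin m → ℝ), ∀ ε > (0 : ℝ), ∃ N : ℕ, ∀ j : Fin m → ℕ,
    StrictMono j → (∀ i, N ≤ j i) → |‖∑ i, a i • x (j i)‖ - ν m a| < ε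

/-- The array of sequences `A` (row `A i` is the `i`-th sequence) generates the
asymptotic model whose finite-combination seminorms are given by `ν`. -/
def GeneratesAsymptoticModel (A : ℕ → ℕ → X) (ν : ∀ l : ℕ, (Fin l → ℝ) → ℝ) : Prop :=
  ∀ (l : ℕ) (a : Fin l → ℝ), ∀ ε > (0 : ℝ), ∃ N : ℕ, ∀ j : Fin l → ℕ,
    StrictMono j → (∀ i, N ≤ j i) → |‖∑ i, a i • A i (j i)‖ - ν l a| < ε

/-- `e` is a Schauder basis of `X`. -/
def IsSchauderBasis (e : ℕ → X) : Prop :=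
  ∀ x : X, ∃! a : ℕ → ℝ,
    Tendsto (fun n => ∑ i ∈ Finset.range n, a i • e i) atTop (𝓝 x)

/-- The basis `e` is 1-unconditional. -/
def OneUnconditional (e : ℕ → X) : Prop :=
  ∀ (F : Finset ℕ) (a ε : ℕ → ℝ), (∀ i, ε i = 1 ∨ ε i = -1) →
    ‖∑ i ∈ F, (ε i * a i) • e i‖ = ‖∑ i ∈ F, a i • e i‖

/-- `x` is a block sequence with respect to the basis `e`. -/
def IsBlockSeq (e : ℕ → X) (x : ℕ → X) : Prop :=
  ∃ F : ℕ → Finset ℕ, (∀ k, (F k).Nonempty) ∧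
    (∀ k l : ℕ, k < l → ∀ i ∈ F k, ∀ j ∈ F l, i < j) ∧
    ∀ k, x k ≠ 0 ∧ x k ∈ Submodule.span ℝ (e '' ↑(F k))

/-- `z` is a finite block sequence with respect to the basis `e`. -/
def IsFinBlockSeq (e : ℕ → X) {n : ℕ} (z : Fin n → X) : Prop :=
  ∃ F : Fin n → Finset ℕ, (∀ k, (F k).Nonempty) ∧
    (∀ k l : Fin n, k < l → ∀ i ∈ F k, ∀ j ∈ F l, i < j) ∧
    ∀ k, z k ≠ 0 ∧ z k ∈ Submodule.span ℝ (e '' ↑(F k))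

/-- `Y` is a block subspace of `X` (with respect to the basis `e`): the closed
linear span of an infinite normalized block sequence. -/
def IsBlockSubspace (e : ℕ → X) (Y : Set X) : Prop :=
  ∃ y : ℕ → X, IsBlockSeq e y ∧ Normalized y ∧
    Y = closure (↑(Submodule.span ℝ (Set.range y)) : Set X)

/-- The finite sequence `z` is `C`-equivalent to a finite basic sequence whose
finite-combination norms are given by `μ`. -/
def FinSeqEquiv (C : ℝ) {n : ℕ} (μ : (Fin n → ℝ) → ℝ) (z : Fin n → X) : Prop :=
  ∃ A B : ℝ, 0 < A ∧ 0 < B ∧ A * B ≤ C ∧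
    ∀ a : Fin n → ℝ, (1 / A) * μ a ≤ ‖∑ i, a i • z i‖ ∧ ‖∑ i, a i • z i‖ ≤ B * μ a

/-- The finite basic sequence with combination norms `μ` is block representable
in `Y ⊆ X`. -/
def BlockRepresentableIn (e : ℕ → X) (Y : Set X) {n : ℕ} (μ : (Fin n → ℝ) → ℝ) : Prop :=
  ∀ ε > (0 : ℝ), ∃ z : Fin n → X, (∀ i, z i ∈ Y) ∧ IsFinBlockSeq e z ∧
    FinSeqEquiv (1 + ε) μ z

/-- `x` is a (Schauder) basic sequence. -/
def IsBasicSeq (x : ℕ → X) : Prop :=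
  (∀ i, x i ≠ 0) ∧ ∃ K : ℝ, 0 < K ∧ ∀ (a : ℕ → ℝ) (m n : ℕ), m ≤ n →
    ‖∑ i ∈ Finset.range m, a i • x i‖ ≤ K * ‖∑ i ∈ Finset.range n, a i • x i‖

end Abstract2

/-- A plegma of `k` strictly increasing `l`-tuples of naturals. -/
def IsPlegma (k l : ℕ) (s : Fin k → Fin l → ℕ) : Prop :=
  (∀ i, StrictMono (s i)) ∧
  (∀ i₁ i₂ : Fin k, ∀ j₁ j₂ : Fin l, j₁ < j₂ → s i₁ j₁ < s i₂ j₂) ∧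
  (∀ i₁ i₂ : Fin k, i₁ < i₂ → ∀ j, s i₁ j ≤ s i₂ j)

/-- A strict plegma: a plegma with pairwise disjoint tuples. -/
def IsStrictPlegma (k l : ℕ) (s : Fin k → Fin l → ℕ) : Prop :=
  IsPlegma k l s ∧ ∀ i₁ i₂ : Fin k, i₁ ≠ i₂ → ∀ j₁ j₂ : Fin l, s i₁ j₁ ≠ s i₂ j₂

section Abstract3

variable {X : Type*} [NormedAddCommGroup X] [NormedSpace ℝ X]

/-- The `l`-array `x` generates the joint spreading model with finite-combination
seminorms `ν`. -/
def GeneratesJSM (l : ℕ) (x : Fin l → ℕ → X)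
    (ν : ∀ k : ℕ, (Fin l → Fin k → ℝ) → ℝ) : Prop :=
  ∀ (k : ℕ) (a : Fin l → Fin k → ℝ), ∀ ε > (0 : ℝ), ∃ N : ℕ,
    ∀ s : Fin l → Fin k → ℕ, IsStrictPlegma l k s → (∀ i j, N ≤ s i j) →
      |‖∑ i, ∑ j, a i j • x i (s i j)‖ - ν k a| < ε

/-- `X` admits a unique joint spreading model with respect to the family of
sequences `F`. -/
def UniqueJSM (F : Set (ℕ → X)) : Prop :=
  ∃ C : ℝ, 1 ≤ C ∧ ∀ (l : ℕ) (x y : Fin l → ℕ → X),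
    (∀ i, x i ∈ F) → (∀ i, y i ∈ F) →
    ∀ ν μ, GeneratesJSM l x ν → GeneratesJSM l y μ →
      ∃ A B : ℝ, 0 < A ∧ 0 < B ∧ A * B ≤ C ∧
        ∀ (k : ℕ) (a : Fin l → Fin k → ℝ),
          (1 / A) * μ k a ≤ ν k a ∧ ν k a ≤ B * μ k a

/-- `X` admits a unique asymptotic model with respect to the family of
sequences `F`. -/
def UniqueAM (F : Set (ℕ → X)) : Prop :=
  ∀ x y : ℕ → ℕ → X, (∀ i, x i ∈ F) → (∀ i, y i ∈ F) →
    ∀ ν μ, GeneratesAsymptoticModel x ν → GeneratesAsymptoticModel y μ →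
      ∃ C : ℝ, 1 ≤ C ∧ NormFamEquiv C μ ν

end Abstract3

/-- A bundled Banach-space candidate. -/
structure BanachPkg : Type 1 where
  X : Type
  [grp : NormedAddCommGroup X]
  [mod : NormedSpace ℝ X]

attribute [instance] BanachPkg.grp BanachPkg.mod

/-! ### c₀₀ and the norming sets -/

/-- The finitely supported real sequences. -/
abbrev c00 : Type := ℕ →₀ ℝ

/-- Minimum of the support (0 for the zero vector). -/
def minSupp (x : c00) : ℕ := if h : x.support.Nonempty then x.support.min' h else 0

/-- Maximum of the support (0 for the zero vector). -/
def maxSupp (x : c00) : ℕ := if h : x.support.Nonempty then x.support.max' h else 0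

/-- Minimum of a finset of naturals (0 if empty). -/
def finsetMin (F : Finset ℕ) : ℕ := if h : F.Nonempty then F.min' h else 0

/-- `x < y` as successive (block) vectors. -/
def Blocks (x y : c00) : Prop := maxSupp x < minSupp y

/-- The Schreier families. -/
def Schreier : ℕ → Set (Finset ℕ)
  | 0 => {F | ∃ i : ℕ, F = {i}}
  | n + 1 => {F | ∃ (d : ℕ) (G : Fin d → Finset ℕ),
      (∀ k, G k ∈ Schreier n) ∧
      (∀ k l : Fin d, k < l → ∀ i ∈ G k, ∀ j ∈ G l, i < j) ∧
      (∀ i ∈ F, d ≤ i) ∧ F = Finset.univ.biUnion G}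

/-- The family `A_m` of sets of cardinality at most `m`. -/
def SchreierA (m : ℕ) : Set (Finset ℕ) := {F | F.card ≤ m}

/-- The operation `A * B` on families of finite sets. -/
def famStar (A B : Set (Finset ℕ)) : Set (Finset ℕ) :=
  {F | ∃ (d : ℕ) (G : Fin d → Finset ℕ),
      (∀ k, G k ∈ B) ∧ (∀ k, (G k).Nonempty) ∧
      (∀ k l : Fin d, k < l → ∀ i ∈ G k, ∀ j ∈ G l, i < j) ∧
      (Finset.univ.image fun k => finsetMin (G k)) ∈ A ∧ F = Finset.univ.biUnion G}

/-- A finite block sequence in `c00` is `S`-admissible. -/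
def Admissible (S : Set (Finset ℕ)) {d : ℕ} (f : Fin d → c00) : Prop :=
  (∀ q, (f q).support.Nonempty) ∧
  (∀ q r : Fin d, q < r → Blocks (f q) (f r)) ∧
  (Finset.univ.image fun q => minSupp (f q)) ∈ S

/-- The two fixed sequences `(m_j)`, `(n_j)` (indexed here starting at `0`, so that
`m 0` plays the role of `m_1` etc.) together with their growth conditions. -/
structure IWParams where
  m : ℕ → ℕ
  n : ℕ → ℕ
  m_mono : StrictMono m
  n_mono : StrictMono n
  m_first : m 0 = 2
  n_first : n 0 = 1
  growth_exp : ∀ C : ℝ, 1 < C → Tendsto (fun j => C ^ (n j) / (m j : ℝ)) atTop atTop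
  growth_ratio : Tendsto (fun j => (m j : ℝ) / (m (j + 1) : ℝ)) atTop (𝓝 0)
  growth_sum : ∀ (l : ℕ) (js : Fin l → ℕ) (j : ℕ), (∀ i, js i ≤ j) →
    (∏ i, m (js i)) < m (j + 1) ^ 2 → (∑ i, n (js i)) + 1 < n (j + 1)

/-- The action of a functional `f ∈ c00` on a vector `x ∈ c00`. -/
def evalPair (f x : c00) : ℝ := f.sum fun i a => a * x i

/-- The norming set `W_iw`, together with admissible weights: `WIW P f w` means
that `f` belongs to the norming set and `w` is a weight of (one representation of)
`f`; the unit functionals `±e_i^*` have weight `∞`. -/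
inductive WIW (P : IWParams) : c00 → ℕ∞ → Prop
  | unit (i : ℕ) (s : ℝ) (hs : s = 1 ∨ s = -1) : WIW P (Finsupp.single i s) ⊤
  | op (l : ℕ) (hl : 0 < l) (js : Fin l → ℕ) (d : ℕ) (f : Fin d → c00) (w : Fin d → ℕ∞)
      (hf : ∀ q, WIW P (f q) (w q))
      (hadm : Admissible (Schreier (∑ i, P.n (js i))) f)
      (hvfg : ∀ q r : Fin d, (q : ℕ) + 1 = (r : ℕ) → (maxSupp (f q) : ℕ∞) < w r) :
      WIW P (((∏ i, P.m (js i) : ℕ) : ℝ)⁻¹ • ∑ q, f q) ((∏ i, P.m (js i) : ℕ) : ℕ∞)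

/-- Membership in the norming set `W_iw`. -/
def memWIW (P : IWParams) (f : c00) : Prop := ∃ w, WIW P f w

/-- The norm of `X_iw`, on finitely supported vectors. -/
def iwNorm (P : IWParams) (x : c00) : ℝ :=
  sSup {r | ∃ f, memWIW P f ∧ r = evalPair f x}

/-- The dual norm of a finitely supported functional, as an element of `X_iw^*`. -/
def iwDualNorm (P : IWParams) (f : c00) : ℝ :=
  sSup {r | ∃ x : c00, iwNorm P x ≤ 1 ∧ r = evalPair f x}

/-- The auxiliary norming set `W_aux^N` together with admissible weights. -/
inductive WAux (P : IWParams) (N : ℕ) : c00 → ℕ∞ → Prop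
  | unit (i : ℕ) (s : ℝ) (hs : s = 1 ∨ s = -1) : WAux P N (Finsupp.single i s) ⊤
  | op (l : ℕ) (hl : 0 < l) (js : Fin l → ℕ) (d : ℕ) (f : Fin d → c00) (w : Fin d → ℕ∞)
      (hf : ∀ q, WAux P N (f q) (w q))
      (hadm : Admissible (famStar (Schreier (∑ i, P.n (js i))) (SchreierA 3)) f)
      (hlarge : ∀ q : Fin d, 0 < (q : ℕ) → (N : ℕ∞) < w q) :
      WAux P N (((∏ i, P.m (js i) : ℕ) : ℝ)⁻¹ • ∑ q, f q) ((∏ i, P.m (js i) : ℕ) : ℕ∞)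

/-- An `(n, ε)` basic special convex combination. -/
def IsBasicSCC (n : ℕ) (ε : ℝ) (x : c00) : Prop :=
  ∃ F : Finset ℕ, x.support ⊆ F ∧ F ∈ Schreier n ∧ (∀ i, 0 ≤ x i) ∧
    (∑ i ∈ F, x i) = 1 ∧ ∀ G ⊆ F, G ∈ Schreier (n - 1) → (∑ i ∈ G, x i) < ε

/-- An `(n, ε)` special convex combination `∑ c i • x i`. -/
def IsSCC (n : ℕ) (ε : ℝ) {m : ℕ} (c : Fin m → ℝ) (x : Fin m → c00) : Prop :=
  (∀ i, (x i).support.Nonempty) ∧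
  (∀ i j : Fin m, i < j → Blocks (x i) (x j)) ∧
  IsBasicSCC n ε (∑ i, c i • Finsupp.single (minSupp (x i)) (1 : ℝ))

/-- `x` generates, with respect to the norm function `Nrm` on `c00`, the spreading
model whose finite-combination seminorms are `ν`. -/
def GeneratesSMwith (Nrm : c00 → ℝ) (x : ℕ → c00) (ν : ∀ m : ℕ, (Fin m → ℝ) → ℝ) : Prop :=
  ∀ (m : ℕ) (a : Fin m → ℝ), ∀ ε > (0 : ℝ), ∃ N : ℕ, ∀ j : Fin m → ℕ,
    StrictMono j → (∀ i, N ≤ j i) → |Nrm (∑ i, a i • x (j i)) - ν m a| < ε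

/-- The array `A` generates, with respect to the norm function `Nrm` on `c00`, the
asymptotic model whose finite-combination seminorms are `ν`. -/
def GeneratesAMwith (Nrm : c00 → ℝ) (A : ℕ → ℕ → c00) (ν : ∀ l : ℕ, (Fin l → ℝ) → ℝ) : Prop :=
  ∀ (l : ℕ) (a : Fin l → ℝ), ∀ ε > (0 : ℝ), ∃ N : ℕ, ∀ j : Fin l → ℕ,
    StrictMono j → (∀ i, N ≤ j i) → |Nrm (∑ i, a i • A i (j i)) - ν l a| < ε

/-- A normalized block sequence in `c00` with respect to a norm function. -/
def IsNormBlockSeq (Nrm : c00 → ℝ) (y : ℕ → c00) : Prop :=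
  (∀ k, (y k).support.Nonempty) ∧ (∀ k, Blocks (y k) (y (k + 1))) ∧ ∀ k, Nrm (y k) = 1

/-- A `(C, (j_i)_{i ∈ I})` rapidly increasing sequence, `I` a (finite) interval. -/
def IsRIS (P : IWParams) (C : ℝ) (I : Finset ℕ) (j : ℕ → ℕ) (x : ℕ → c00) : Prop :=
  (∀ a ∈ I, ∀ b ∈ I, ∀ c : ℕ, a ≤ c → c ≤ b → c ∈ I) ∧
  (∀ a ∈ I, ∀ b ∈ I, a < b → j a < j b) ∧
  (∀ i ∈ I, (x i).support.Nonempty) ∧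
  (∀ a ∈ I, ∀ b ∈ I, a < b → Blocks (x a) (x b)) ∧
  (∀ i ∈ I, iwNorm P (x i) ≤ C) ∧
  (∀ i ∈ I, ∀ i' ∈ I, i' + 1 = i → (maxSupp (x i') : ℝ) < Real.sqrt (P.m (j i))) ∧
  (∀ i ∈ I, ∀ f w, WIW P f w → w < ((P.m (j i) : ℕ) : ℕ∞) →
    |evalPair f (x i)| ≤ C / (w.toNat : ℝ))

/-- An infinite `(C, (j_i)_i)` rapidly increasing sequence. -/
def IsRISNat (P : IWParams) (C : ℝ) (j : ℕ → ℕ) (x : ℕ → c00) : Prop :=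
  StrictMono j ∧ (∀ i, (x i).support.Nonempty) ∧ (∀ i, Blocks (x i) (x (i + 1))) ∧
  (∀ i, iwNorm P (x i) ≤ C) ∧
  (∀ i, (maxSupp (x i) : ℝ) < Real.sqrt (P.m (j (i + 1)))) ∧
  (∀ i, ∀ f w, WIW P f w → w < ((P.m (j i) : ℕ) : ℕ∞) →
    |evalPair f (x i)| ≤ C / (w.toNat : ℝ))

/-- `X` together with the basis `e` is a realization of the space `X_iw`: a Banach
space in which `c00` sits isometrically (w.r.t. `iwNorm`) and densely. -/
structure IsIWRealization (P : IWParams) (X : Type*) [NormedAddCommGroup X]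
    [NormedSpace ℝ X] (e : ℕ → X) : Prop where
  complete : CompleteSpace X
  dense : DenseRange fun a : c00 => ∑ i ∈ a.support, a i • e i
  norm_eq : ∀ a : c00, ‖∑ i ∈ a.support, a i • e i‖ = iwNorm P a

/-- The conjugate exponent of `p`. -/
def conjExp (p : ℝ) : ℝ := p / (p - 1)

/-- The norming set `W_iw^p` together with admissible weights. -/
inductive WIWp (P : IWParams) (p : ℝ) : c00 → ℕ∞ → Prop
  | unit (i : ℕ) (s : ℝ) (hs : s = 1 ∨ s = -1) : WIWp P p (Finsupp.single i s) ⊤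
  | op (l : ℕ) (hl : 0 < l) (js : Fin l → ℕ) (d : ℕ) (f : Fin d → c00) (w : Fin d → ℕ∞)
      (lam : Fin d → ℝ) (hlam : (∑ q, |lam q| ^ conjExp p) ≤ 1)
      (hf : ∀ q, WIWp P p (f q) (w q))
      (hadm : Admissible (Schreier (∑ i, P.n (js i))) f)
      (hvfg : ∀ q r : Fin d, (q : ℕ) + 1 = (r : ℕ) → (maxSupp (f q) : ℕ∞) < w r) :
      WIWp P p (((∏ i, P.m (js i) : ℕ) : ℝ)⁻¹ • ∑ q, lam q • f q)
        ((∏ i, P.m (js i) : ℕ) : ℕ∞)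

/-- The norm of `X_iw^p` on finitely supported vectors. -/
def iwpNorm (P : IWParams) (p : ℝ) (x : c00) : ℝ :=
  sSup {r | ∃ f, (∃ w, WIWp P p f w) ∧ r = evalPair f x}

/-- The norming set of the space `X̃_iw`, together with admissible weights. -/
inductive WT (P : IWParams) : c00 → ℕ∞ → Prop
  | unit (i : ℕ) (s : ℝ) (hs : s = 1 ∨ s = -1) : WT P (Finsupp.single i s) ⊤
  | op (j : ℕ) (d : ℕ) (f : Fin d → c00) (w : Fin d → ℕ∞)
      (hf : ∀ q, WT P (f q) (w q))
      (hadm : Admissible (Schreier (P.n j)) f)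
      (hvfg : ∀ q r : Fin d, (q : ℕ) + 1 = (r : ℕ) → (maxSupp (f q) : ℕ∞) < w r) :
      WT P ((P.m j : ℝ)⁻¹ • ∑ q, f q) ((P.m j : ℕ) : ℕ∞)

/-- The norm of `X̃_iw` on finitely supported vectors. -/
def tNorm (P : IWParams) (x : c00) : ℝ :=
  sSup {r | ∃ f, (∃ w, WT P f w) ∧ r = evalPair f x}

end

/-! ### A Ramsey-type extraction of subsequences -/

section Extraction

/-- The filter describing "`j_1 < ... < j_l` with `j_1 → ∞`". -/
def incFilter (l : ℕ) : Filter (Fin l → ℕ) := atTop ⊓ 𝓟 {j | StrictMono j}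

theorem eventually_incFilter {l : ℕ} {p : (Fin l → ℕ) → Prop} :
    (∀ᶠ j in incFilter l, p j) ↔ ∃ N : ℕ, ∀ j, StrictMono j → (∀ i, N ≤ j i) → p j := by
  rw [incFilter, eventually_inf_principal, eventually_atTop]
  constructor
  · rintro ⟨a, ha⟩
    exact ⟨Finset.univ.sup a, fun j hj hN =>
      ha j (fun i => (Finset.le_sup (Finset.mem_univ i)).trans (hN i)) hj⟩
  · rintro ⟨N, hN⟩
    exact ⟨fun _ => N, fun j hj hm => hN j hm hj⟩

instance incFilter_neBot (l : ℕ) : (incFilter l).NeBot := by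
  refine ⟨fun h => ?_⟩
  have h' : ∀ᶠ j in incFilter l, False := by rw [h]; exact eventually_bot
  obtain ⟨N, hN⟩ := eventually_incFilter.1 h'
  exact hN (fun i => N + i) (fun a b hab => Nat.add_lt_add_left hab N)
    (fun i => Nat.le_add_right _ _)

theorem tendsto_incFilter_iff {l : ℕ} {g : (Fin l → ℕ) → ℝ} {c : ℝ} :
    Tendsto g (incFilter l) (𝓝 c) ↔ ∀ ε > (0 : ℝ), ∃ N : ℕ, ∀ j : Fin l → ℕ,
      StrictMono j → (∀ i, N ≤ j i) → |g j - c| < ε := by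
  simp only [Metric.tendsto_nhds, Real.dist_eq, eventually_incFilter]

theorem tendsto_comp_incFilter {φ : ℕ → ℕ} (hφ : StrictMono φ) (l : ℕ) :
    Tendsto (fun j : Fin l → ℕ => φ ∘ j) (incFilter l) (incFilter l) := by
  intro s hs
  obtain ⟨N, hN⟩ := eventually_incFilter.1 hs
  exact eventually_incFilter.2 ⟨N, fun j hj hm =>
    hN _ (hφ.comp hj) fun i => (hm i).trans hφ.le_apply⟩

theorem tendsto_restrict_incFilter {l L : ℕ} {q : Fin l → Fin L} (hq : StrictMono q) :
    Tendsto (fun j : Fin L → ℕ => j ∘ q) (incFilter L) (incFilter l) := by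
  intro s hs
  obtain ⟨N, hN⟩ := eventually_incFilter.1 hs
  exact eventually_incFilter.2 ⟨N, fun j hj hm => hN _ (hj.comp hq) fun i => hm _⟩

/-- The iterated limit `lim_{j_1} ... lim_{j_k} f (p ++ [j_1, ..., j_k])`, all limits being taken
along a fixed nonprincipal ultrafilter on `ℕ`. -/
noncomputable def iterLim (f : List ℕ → ℝ) : ℕ → List ℕ → ℝ
  | 0, p => f p
  | k + 1, p => limUnder (hyperfilter ℕ : Filter ℕ) (fun j => iterLim f k (p ++ [j]))

theorem exists_tendsto_hyperfilter {g : ℕ → ℝ} {B : ℝ} (hg : ∀ j, |g j| ≤ B) :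
    ∃ c, |c| ≤ B ∧ Tendsto g (hyperfilter ℕ : Filter ℕ) (𝓝 c) := by
  obtain ⟨c, hc, h⟩ := (isCompact_Icc (a := -B) (b := B)).ultrafilter_le_nhds
    ((hyperfilter ℕ).map g) (by
      rw [le_principal_iff]
      exact Filter.Eventually.of_forall (f := (hyperfilter ℕ : Filter ℕ)) fun j => abs_le.1 (hg j))
  exact ⟨c, abs_le.2 hc, h⟩

theorem abs_iterLim_le {f : List ℕ → ℝ} {B : ℝ} (hf : ∀ p, |f p| ≤ B) (k : ℕ) :
    ∀ p, |iterLim f k p| ≤ B := by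
  induction k with
  | zero => exact hf
  | succ k ih =>
    intro p
    obtain ⟨c, hc, h⟩ := exists_tendsto_hyperfilter (fun j => ih (p ++ [j]))
    rw [iterLim, h.limUnder_eq]
    exact hc

theorem tendsto_iterLim {f : List ℕ → ℝ} {B : ℝ} (hf : ∀ p, |f p| ≤ B) (k : ℕ) (p : List ℕ) :
    Tendsto (fun j => iterLim f k (p ++ [j])) (hyperfilter ℕ : Filter ℕ)
      (𝓝 (iterLim f (k + 1) p)) := by
  obtain ⟨c, -, h⟩ := exists_tendsto_hyperfilter (fun j => abs_iterLim_le hf k (p ++ [j]))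
  exact tendsto_nhds_limUnder ⟨c, h⟩

/-- At stage `M`, some `j ≥ M` realizes up to `1 / (M + 1)` all the (finitely many) one-step limits
defined by the first functions, with prefixes of size at most `M`. -/
theorem exists_good_step (f : ℕ → List ℕ → ℝ) (B : ℕ → ℝ) (hB : ∀ c p, |f c p| ≤ B c) (M : ℕ) :
    ∃ j, M ≤ j ∧ ∀ c ≤ M, ∀ k ≤ M, ∀ p : List ℕ, p.length ≤ M → (∀ e ∈ p, e < M) →
      |iterLim (f c) k (p ++ [j]) - iterLim (f c) (k + 1) p| < 1 / ((M : ℝ) + 1) := by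
  have hfin : {p : List ℕ | p.length ≤ M ∧ ∀ e ∈ p, e < M}.Finite := by
    refine ((List.finite_length_le (Fin M) M).image (List.map Fin.val)).subset ?_
    rintro p ⟨hp, he⟩
    refine ⟨p.pmap (fun e he => ⟨e, he⟩) he, by simpa using hp, ?_⟩
    rw [List.map_pmap]
    simp
  have h1 : ∀ᶠ j in (hyperfilter ℕ : Filter ℕ), ∀ c ∈ Set.Iic M, ∀ k ∈ Set.Iic M,
      ∀ p ∈ {p : List ℕ | p.length ≤ M ∧ ∀ e ∈ p, e < M},
      |iterLim (f c) k (p ++ [j]) - iterLim (f c) (k + 1) p| < 1 / ((M : ℝ) + 1) := by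
    refine (eventually_all_finite (Set.finite_Iic M)).2 fun c _ =>
      (eventually_all_finite (Set.finite_Iic M)).2 fun k _ =>
      (eventually_all_finite hfin).2 fun p _ => ?_
    exact Metric.tendsto_nhds.1 (tendsto_iterLim (hB c) k p) _ (by positivity)
  have h2 : ∀ᶠ j in (hyperfilter ℕ : Filter ℕ), M ≤ j :=
    (Nat.cofinite_eq_atTop ▸ hyperfilter_le_cofinite :
      (hyperfilter ℕ : Filter ℕ) ≤ atTop) (eventually_ge_atTop M)
  obtain ⟨j, hj, hM⟩ := (h1.and h2).exists
  exact ⟨j, hM, fun c hc k hk p hp he => hj c hc k hk p ⟨hp, he⟩⟩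

/-- Countably many bounded functions of finite increasing sequences of naturals all converge along
the increasing sequences from a common infinite set. -/
theorem exists_subseq_tendsto (f : ℕ → List ℕ → ℝ) (B : ℕ → ℝ) (hB : ∀ c p, |f c p| ≤ B c) :
    ∃ φ : ℕ → ℕ, StrictMono φ ∧ ∀ c l, ∃ L : ℝ,
      Tendsto (fun j : Fin l → ℕ => f c (List.ofFn (φ ∘ j))) (incFilter l) (𝓝 L) := by
  choose g hgM hg using exists_good_step f B hB
  let φ : ℕ → ℕ := fun n => Nat.rec (g 0) (fun _ r => g (r + 1)) n
  have hφs : ∀ n, φ (n + 1) = g (φ n + 1) := fun n => rfl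
  have hφ : StrictMono φ := strictMono_nat_of_lt_succ fun n => by
    rw [hφs]; exact Nat.lt_of_succ_le (hgM _)
  have hstage : ∀ n, ∃ M, n ≤ M ∧ (∀ i < n, φ i < M) ∧ φ n = g M := by
    intro n
    cases n with
    | zero => exact ⟨0, le_rfl, fun i hi => absurd hi (Nat.not_lt_zero i), rfl⟩
    | succ n =>
      exact ⟨φ n + 1, Nat.succ_le_succ hφ.le_apply,
        fun i hi => Nat.lt_succ_of_le (hφ.monotone (Nat.le_of_lt_succ hi)), hφs n⟩
  refine ⟨φ, hφ, fun c l => ⟨iterLim (f c) l [], ?_⟩⟩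
  -- The one-step errors are telescoped along the increasing sequence `js`.
  have key : ∀ N, c ≤ N → ∀ js : List ℕ, js.Pairwise (· < ·) → (∀ j ∈ js, N ≤ j) →
      ∀ p : List ℕ, (∀ e ∈ p, ∀ j ∈ js, ∃ i < j, e = φ i) → p.length + js.length ≤ N →
      |f c (p ++ js.map φ) - iterLim (f c) js.length p| ≤ js.length * (1 / ((N : ℝ) + 1)) := by
    intro N hc js
    induction js with
    | nil => intro _ _ p _ _; simp [iterLim]
    | cons j js ih =>
      intro hs hN p hp hlen
      rw [List.pairwise_cons] at hs
      simp only [List.length_cons] at hlen ⊢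
      have h1 := ih hs.2 (fun j hj => hN j (List.mem_cons_of_mem _ hj)) (p ++ [φ j])
        (by
          intro e he i hi
          rcases List.mem_append.1 he with he | he
          · exact hp e he i (List.mem_cons_of_mem _ hi)
          · exact ⟨j, hs.1 i hi, by simpa using he⟩)
        (by simp; omega)
      obtain ⟨M, hjM, hφM, hgj⟩ := hstage j
      have hNM : N ≤ M := (hN j List.mem_cons_self).trans hjM
      have h2 := hg M c (hc.trans hNM) js.length (by omega) p (by omega) (by
        intro e he
        obtain ⟨i, hi, rfl⟩ := hp e he j List.mem_cons_self
        exact hφM i hi)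
      rw [← hgj] at h2
      have h3 : 1 / ((M : ℝ) + 1) ≤ 1 / ((N : ℝ) + 1) := by
        have : (N : ℝ) ≤ M := by exact_mod_cast hNM
        gcongr
      rw [List.append_assoc, List.singleton_append] at h1
      rw [List.map_cons]
      push_cast
      rw [add_mul, one_mul]
      exact (abs_sub_le _ _ _).trans (add_le_add h1 (h2.le.trans h3))
  rw [tendsto_incFilter_iff]
  intro ε hε
  obtain ⟨N, hN⟩ := exists_nat_gt ((l : ℝ) / ε)
  refine ⟨max N (max c l), fun j hj hm => ?_⟩
  have hk := key (max N (max c l)) (by simp) (List.ofFn j)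
    ((List.sortedLT_ofFn_iff.2 hj).pairwise) (by
      intro i hi
      obtain ⟨t, rfl⟩ := List.mem_ofFn.1 hi
      exact hm t) [] (by simp) (by simp)
  rw [List.map_ofFn, List.nil_append, List.length_ofFn] at hk
  refine hk.trans_lt ?_
  have hNm : (N : ℝ) ≤ (max N (max c l) : ℕ) := by exact_mod_cast le_max_left _ _
  rw [mul_one_div, div_lt_iff₀ (by positivity)]
  rw [div_lt_iff₀ hε] at hN
  nlinarith

end Extraction

/-! ### Asymptotic models and joint spreading models -/

section Models

variable {X : Type*} [NormedAddCommGroup X] [NormedSpace ℝ X]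

theorem generatesAsymptoticModel_iff {A : ℕ → ℕ → X} {ν : ∀ l : ℕ, (Fin l → ℝ) → ℝ} :
    GeneratesAsymptoticModel A ν ↔ ∀ (l : ℕ) (a : Fin l → ℝ),
      Tendsto (fun j : Fin l → ℕ => ‖∑ i, a i • A i (j i)‖) (incFilter l) (𝓝 (ν l a)) := by
  simp only [tendsto_incFilter_iff]
  rfl

theorem GeneratesAsymptoticModel.nonneg {A : ℕ → ℕ → X} {ν : ∀ l : ℕ, (Fin l → ℝ) → ℝ}
    (h : GeneratesAsymptoticModel A ν) (l : ℕ) (a : Fin l → ℝ) : 0 ≤ ν l a :=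
  ge_of_tendsto' (generatesAsymptoticModel_iff.1 h l a) fun _ => norm_nonneg _

theorem norm_sum_smul_le {l : ℕ} (a : Fin l → ℝ) {v : Fin l → X} (hv : ∀ i, ‖v i‖ = 1) :
    ‖∑ i, a i • v i‖ ≤ ∑ i, |a i| := by
  refine (norm_sum_le _ _).trans (le_of_eq (Finset.sum_congr rfl fun i _ => ?_))
  rw [norm_smul, hv i, mul_one, Real.norm_eq_abs]

theorem abs_norm_sum_sub_le {l : ℕ} (a b : Fin l → ℝ) {v : Fin l → X} (hv : ∀ i, ‖v i‖ = 1) :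
    |‖∑ i, a i • v i‖ - ‖∑ i, b i • v i‖| ≤ l * dist a b := by
  refine (abs_norm_sub_norm_le _ _).trans ?_
  rw [← Finset.sum_sub_distrib]
  simp only [← sub_smul]
  refine (norm_sum_smul_le (fun i => a i - b i) hv).trans ?_
  refine (Finset.sum_le_sum fun i _ => dist_le_pi_dist a b i).trans ?_
  simp

/-- Every array of normalized sequences has a common subsequence generating an asymptotic model.
Convergence is first achieved for a dense sequence of coefficient vectors of each length, and passes
to all coefficients because the norms are Lipschitz in them. -/
theorem exists_subseq_asymptoticModel (x : ℕ → ℕ → X) (hx : ∀ i, Normalized (x i)) :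
    ∃ φ : ℕ → ℕ, StrictMono φ ∧ ∃ ν, GeneratesAsymptoticModel (fun i => x i ∘ φ) ν := by
  let d : ∀ l : ℕ, ℕ → Fin l → ℝ := fun l => TopologicalSpace.denseSeq (Fin l → ℝ)
  obtain ⟨φ, hφ, hlim⟩ := exists_subseq_tendsto
    (fun c p => ‖∑ i : Fin c.unpair.1, d c.unpair.1 c.unpair.2 i • x i (p.getD i 0)‖)
    (fun c => ∑ i : Fin c.unpair.1, |d c.unpair.1 c.unpair.2 i|)
    (fun c p => by
      rw [abs_norm]
      exact norm_sum_smul_le _ fun i => hx _ _)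
  have hlim' : ∀ l q, ∃ L : ℝ, Tendsto (fun j : Fin l → ℕ => ‖∑ i, d l q i • x i (φ (j i))‖)
      (incFilter l) (𝓝 L) := by
    intro l q
    obtain ⟨L, hL⟩ := hlim (Nat.pair l q) l
    refine ⟨L, ?_⟩
    rw [Nat.unpair_pair] at hL
    simpa [List.getD_eq_getElem] using hL
  have hex : ∀ (l : ℕ) (a : Fin l → ℝ), ∃ L : ℝ,
      Tendsto (fun j : Fin l → ℕ => ‖∑ i, a i • x i (φ (j i))‖) (incFilter l) (𝓝 L) := by
    intro l a
    refine cauchy_map_iff_exists_tendsto.1 (Metric.cauchy_iff.2 ⟨inferInstance, fun ε hε => ?_⟩)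
    have hδ : 0 < ε / (4 * (l + 1)) := by positivity
    obtain ⟨q, hq⟩ := (TopologicalSpace.denseRange_denseSeq (Fin l → ℝ)).exists_dist_lt a hδ
    have hq' : (l : ℝ) * dist a (d l q) ≤ ε / 4 := by
      have h1 : (l : ℝ) * dist a (d l q) ≤ (l + 1) * (ε / (4 * (l + 1))) := by
        gcongr
        linarith
      refine h1.trans (le_of_eq ?_)
      field_simp
    obtain ⟨L, hL⟩ := hlim' l q
    have hev := Metric.tendsto_nhds.1 hL (ε / 4) (by positivity)
    refine ⟨_, image_mem_map hev, ?_⟩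
    rintro _ ⟨j, hj, rfl⟩ _ ⟨j', hj', rfl⟩
    have e1 := abs_norm_sum_sub_le a (d l q) (v := fun i => x i (φ (j i))) fun i => hx _ _
    have e2 := abs_norm_sum_sub_le a (d l q) (v := fun i => x i (φ (j' i))) fun i => hx _ _
    simp only [Set.mem_ofPred_eq, Real.dist_eq] at hj hj' ⊢
    rw [abs_le] at e1 e2
    rw [abs_lt] at hj hj' ⊢
    constructor <;> linarith [e1.1, e1.2, e2.1, e2.2, hj.1, hj.2, hj'.1, hj'.2]
  choose ν hν using hex
  exact ⟨φ, hφ, ν, generatesAsymptoticModel_iff.2 hν⟩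

/-- If the rows of `A` occur, up to a common subsequence, among the rows of `A'` in the increasing
positions `q`, then the model of `A'` contains that of `A` in these positions. -/
theorem asymptoticModel_extend_eq {A A' : ℕ → ℕ → X} {ν ν' : ∀ l : ℕ, (Fin l → ℝ) → ℝ}
    (h : GeneratesAsymptoticModel A ν) (h' : GeneratesAsymptoticModel A' ν')
    {l L : ℕ} {q : Fin l → Fin L} (hq : StrictMono q) {φ : ℕ → ℕ} (hφ : StrictMono φ)
    (hA : ∀ i, A' (q i) = A i ∘ φ) (a : Fin l → ℝ) :
    ν' L (Function.extend q a 0) = ν l a := by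
  have h1 := ((generatesAsymptoticModel_iff.1 h l a).comp (tendsto_comp_incFilter hφ l)).comp
    (tendsto_restrict_incFilter hq)
  refine tendsto_nhds_unique (generatesAsymptoticModel_iff.1 h' L (Function.extend q a 0))
    (h1.congr fun j => ?_)
  simp only [Function.comp_apply]
  congr 1
  have hinj := hq.injective
  symm
  rw [← Finset.sum_subset (Finset.subset_univ (Finset.univ.image q)),
    Finset.sum_image hinj.injOn]
  · refine Finset.sum_congr rfl fun i _ => ?_
    rw [hinj.extend_apply, hA]
    rfl
  · intro p _ hp
    rw [Function.extend_apply', Pi.zero_apply, zero_smul]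
    rintro ⟨i, rfl⟩
    exact hp (Finset.mem_image_of_mem _ (Finset.mem_univ i))

theorem isStrictPlegma_flatten {l k : ℕ} {j : Fin (k * l) → ℕ} (hj : StrictMono j) :
    IsStrictPlegma l k (fun i t => j (finProdFinEquiv (t, i))) := by
  have hlt : ∀ (i₁ i₂ : Fin l) (t₁ t₂ : Fin k), t₁ < t₂ →
      finProdFinEquiv (t₁, i₁) < finProdFinEquiv (t₂, i₂) := by
    intro i₁ i₂ t₁ t₂ ht
    rw [Fin.lt_def, finProdFinEquiv_apply_val, finProdFinEquiv_apply_val]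
    have h1 : l * ((t₁ : ℕ) + 1) ≤ l * t₂ := Nat.mul_le_mul_left _ ht
    have := i₁.isLt
    simp only [mul_add, mul_one] at h1 ⊢
    omega
  refine ⟨⟨fun i t₁ t₂ ht => hj (hlt i i t₁ t₂ ht), fun i₁ i₂ t₁ t₂ ht => hj (hlt i₁ i₂ t₁ t₂ ht),
    fun i₁ i₂ hi t => (hj ?_).le⟩, fun i₁ i₂ hi t₁ t₂ he => ?_⟩
  · rw [Fin.lt_def, finProdFinEquiv_apply_val, finProdFinEquiv_apply_val]
    exact Nat.add_lt_add_right hi _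
  · have := finProdFinEquiv.injective (hj.injective he)
    exact hi (Prod.ext_iff.1 this).2

theorem strictMono_of_isStrictPlegma {l k : ℕ} {s : Fin l → Fin k → ℕ}
    (hs : IsStrictPlegma l k s) :
    StrictMono fun p : Fin (k * l) => s (finProdFinEquiv.symm p).2 (finProdFinEquiv.symm p).1 := by
  intro p p' hp
  obtain ⟨⟨t, i⟩, rfl⟩ := finProdFinEquiv.surjective p
  obtain ⟨⟨t', i'⟩, rfl⟩ := finProdFinEquiv.surjective p'
  simp only [Equiv.symm_apply_apply]
  rw [Fin.lt_def, finProdFinEquiv_apply_val, finProdFinEquiv_apply_val] at hp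
  simp only at hp
  rcases lt_trichotomy t t' with h | h | h
  · exact hs.1.2.1 i i' t t' h
  · subst h
    have hi : i < i' := Fin.lt_def.2 (by omega)
    exact lt_of_le_of_ne (hs.1.2.2 i i' hi t) (hs.2 i i' hi.ne t t)
  · exfalso
    have h1 : l * ((t' : ℕ) + 1) ≤ l * t := Nat.mul_le_mul_left _ h
    have := i'.isLt
    simp only [mul_add, mul_one] at h1
    omega

/-- Strict plegmas of `l` tuples of length `k` are the increasing sequences of length `k * l`, read
in the order `s_1(1) < ... < s_l(1) < s_1(2) < ...`. -/
theorem generatesJSM_iff {l : ℕ} {x : Fin l → ℕ → X} {ν : ∀ k : ℕ, (Fin l → Fin k → ℝ) → ℝ} :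
    GeneratesJSM l x ν ↔ ∀ (k : ℕ) (a : Fin l → Fin k → ℝ),
      Tendsto (fun j : Fin (k * l) → ℕ => ‖∑ i, ∑ t, a i t • x i (j (finProdFinEquiv (t, i)))‖)
        (incFilter (k * l)) (𝓝 (ν k a)) := by
  simp only [tendsto_incFilter_iff]
  refine forall_congr' fun k => forall_congr' fun a => forall_congr' fun ε =>
    forall_congr' fun hε => exists_congr fun N => ⟨fun h j hj hm => ?_, fun h s hs hm => ?_⟩
  · exact h _ (isStrictPlegma_flatten hj) fun i t => hm _
  · have := h _ (strictMono_of_isStrictPlegma hs) fun p => hm _ _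
    simpa only [Equiv.symm_apply_apply] using this

/-- The coefficients of an `l`-array as a single finite sequence, in the order of
`generatesJSM_iff`. -/
def flattenCoeff {l k : ℕ} (a : Fin l → Fin k → ℝ) : Fin (k * l) → ℝ :=
  fun p => a (finProdFinEquiv.symm p).2 (finProdFinEquiv.symm p).1

/-- The infinite array repeating the `l` given sequences periodically. -/
def periodicArray {l : ℕ} (hl : 0 < l) (x : Fin l → ℕ → X) : ℕ → ℕ → X :=
  fun p => x ⟨p % l, Nat.mod_lt p hl⟩

theorem periodic_sum_eq {l k : ℕ} (hl : 0 < l) (x : Fin l → ℕ → X) (a : Fin l → Fin k → ℝ)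
    (j : Fin (k * l) → ℕ) :
    ∑ p : Fin (k * l), flattenCoeff a p • periodicArray hl x p (j p) =
      ∑ i, ∑ t, a i t • x i (j (finProdFinEquiv (t, i))) := by
  rw [← finProdFinEquiv.sum_comp, Fintype.sum_prod_type, Finset.sum_comm]
  refine Finset.sum_congr rfl fun i _ => Finset.sum_congr rfl fun t _ => ?_
  have h1 : (⟨(finProdFinEquiv (t, i) : Fin (k * l)).val % l, Nat.mod_lt _ hl⟩ : Fin l) = i := by
    apply Fin.ext
    simp only [finProdFinEquiv_apply_val, Nat.add_mul_mod_self_left]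
    exact Nat.mod_eq_of_lt i.isLt
  simp only [flattenCoeff, periodicArray, Equiv.symm_apply_apply, h1]

/-- An asymptotic model of the periodic repetition of an `l`-array is a joint spreading model of
that array. -/
theorem generatesJSM_of_periodic {l : ℕ} (hl : 0 < l) {x : Fin l → ℕ → X}
    {α : ∀ m : ℕ, (Fin m → ℝ) → ℝ} (h : GeneratesAsymptoticModel (periodicArray hl x) α) :
    GeneratesJSM l x fun k a => α (k * l) (flattenCoeff a) := by
  rw [generatesJSM_iff]
  intro k a
  refine (generatesAsymptoticModel_iff.1 h (k * l) (flattenCoeff a)).congr fun j => ?_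
  rw [periodic_sum_eq]

theorem GeneratesJSM.comp {l : ℕ} {x : Fin l → ℕ → X} {ν : ∀ k : ℕ, (Fin l → Fin k → ℝ) → ℝ}
    (h : GeneratesJSM l x ν) {φ : ℕ → ℕ} (hφ : StrictMono φ) :
    GeneratesJSM l (fun i => x i ∘ φ) ν := by
  rw [generatesJSM_iff] at h ⊢
  intro k a
  refine ((h k a).comp (tendsto_comp_incFilter hφ (k * l))).congr fun j => ?_
  simp only [Function.comp_apply]

theorem GeneratesJSM.unique {l : ℕ} {x : Fin l → ℕ → X}
    {ν ν' : ∀ k : ℕ, (Fin l → Fin k → ℝ) → ℝ} (h : GeneratesJSM l x ν)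
    (h' : GeneratesJSM l x ν') (k : ℕ) (a : Fin l → Fin k → ℝ) : ν k a = ν' k a :=
  tendsto_nhds_unique (generatesJSM_iff.1 h k a) (generatesJSM_iff.1 h' k a)

/-- The first vectors of a joint spreading model: strict plegmas of singletons are increasing
sequences. -/
theorem GeneratesJSM.tendsto_one {l : ℕ} {x : Fin l → ℕ → X}
    {ν : ∀ k : ℕ, (Fin l → Fin k → ℝ) → ℝ} (h : GeneratesJSM l x ν) (a : Fin l → ℝ) :
    Tendsto (fun j : Fin l → ℕ => ‖∑ i, a i • x i (j i)‖) (incFilter l)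
      (𝓝 (ν 1 fun i _ => a i)) := by
  rw [tendsto_incFilter_iff]
  intro ε hε
  obtain ⟨N, hN⟩ := h 1 (fun i _ => a i) ε hε
  refine ⟨N, fun j hj hm => ?_⟩
  have hs : IsStrictPlegma l 1 fun i _ => j i :=
    ⟨⟨fun i t t' ht => absurd ht (by simp [Subsingleton.elim t t']),
      fun i i' t t' ht => absurd ht (by simp [Subsingleton.elim t t']),
      fun i i' hi t => (hj hi).le⟩, fun i i' hi t t' he => hi (hj.injective he)⟩
  simpa using hN _ hs fun i _ => hm i

/-- Every nonempty array of normalized sequences has a common subsequence, along which its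
periodic repetition generates an asymptotic model, and hence the array a joint spreading model. -/
theorem exists_subseq_jsm {l : ℕ} (hl : 0 < l) (x : Fin l → ℕ → X) (hx : ∀ i, Normalized (x i)) :
    ∃ φ : ℕ → ℕ, StrictMono φ ∧ ∃ α,
      GeneratesAsymptoticModel (periodicArray hl fun i => x i ∘ φ) α ∧
      GeneratesJSM l (fun i => x i ∘ φ) fun k a => α (k * l) (flattenCoeff a) := by
  obtain ⟨φ, hφ, α, hα⟩ := exists_subseq_asymptoticModel (periodicArray hl x) fun p => hx _
  exact ⟨φ, hφ, α, hα, generatesJSM_of_periodic hl hα⟩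

end Models

/-! ### The admissible collections of sequences -/

section Families

variable {X : Type*} [NormedAddCommGroup X] [NormedSpace ℝ X]

theorem IsBasicSeq.comp {x : ℕ → X} (hx : IsBasicSeq x) {φ : ℕ → ℕ} (hφ : StrictMono φ) :
    IsBasicSeq (x ∘ φ) := by
  obtain ⟨h0, K, hK, h⟩ := hx
  refine ⟨fun i => h0 _, K, hK, fun a m n hmn => ?_⟩
  have key : ∀ m, ∑ i ∈ Finset.range m, a i • (x ∘ φ) i =
      ∑ i ∈ Finset.range (φ m), Function.extend φ a 0 i • x i := by
    intro m
    symm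
    rw [← Finset.sum_subset (s₁ := (Finset.range m).image φ), Finset.sum_image hφ.injective.injOn]
    · refine Finset.sum_congr rfl fun i _ => ?_
      rw [hφ.injective.extend_apply]
      rfl
    · intro p hp
      obtain ⟨i, hi, rfl⟩ := Finset.mem_image.1 hp
      exact Finset.mem_range.2 (hφ (Finset.mem_range.1 hi))
    · intro p hp hp'
      rw [Function.extend_apply', Pi.zero_apply, zero_smul]
      rintro ⟨i, rfl⟩
      exact hp' (Finset.mem_image_of_mem _
        (Finset.mem_range.2 (hφ.lt_iff_lt.1 (Finset.mem_range.1 hp))))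
  rw [key, key]
  exact h _ _ _ (hφ.monotone hmn)

theorem IsBlockSeq.comp {e x : ℕ → X} (hx : IsBlockSeq e x) {φ : ℕ → ℕ} (hφ : StrictMono φ) :
    IsBlockSeq e (x ∘ φ) := by
  obtain ⟨G, h1, h2, h3⟩ := hx
  exact ⟨G ∘ φ, fun k => h1 _, fun k l hkl => h2 _ _ (hφ hkl), fun k => h3 _⟩

end Families

/-! ### The two implications -/

section Uniqueness

variable {X : Type*} [NormedAddCommGroup X] [NormedSpace ℝ X]

/-- The passage from joint spreading models to asymptotic models: the first `l` vectors of an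
asymptotic model are the first vectors of a joint spreading model of the first `l` rows. The
constants do not depend on `l`, since both models are normalized. -/
theorem uniqueAM_of_uniqueJSM {F : Set (ℕ → X)} (hn : ∀ x ∈ F, Normalized x)
    (hs : ∀ x ∈ F, ∀ φ : ℕ → ℕ, StrictMono φ → x ∘ φ ∈ F) (h : UniqueJSM F) : UniqueAM F := by
  obtain ⟨C, hC, h⟩ := h
  intro x y hx hy ν μ hν hμ
  have hC0 : 0 < C := by linarith
  refine ⟨C * C, by nlinarith, C, C, hC0, hC0, le_rfl, fun l a => ?_⟩
  rcases Nat.eq_zero_or_pos l with rfl | hl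
  · have e1 : ν 0 a = 0 := tendsto_nhds_unique (generatesAsymptoticModel_iff.1 hν 0 a) (by simp)
    have e2 : μ 0 a = 0 := tendsto_nhds_unique (generatesAsymptoticModel_iff.1 hμ 0 a) (by simp)
    simp [e1, e2]
  have transfer : ∀ (z : ℕ → ℕ → X) (ρ : ∀ l : ℕ, (Fin l → ℝ) → ℝ), (∀ i, z i ∈ F) →
      GeneratesAsymptoticModel z ρ → ∃ (w : Fin l → ℕ → X) (σ : ∀ k, (Fin l → Fin k → ℝ) → ℝ),
        (∀ i, w i ∈ F) ∧ GeneratesJSM l w σ ∧ ∀ a : Fin l → ℝ, σ 1 (fun i _ => a i) = ρ l a := by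
    intro z ρ hz hρ
    obtain ⟨φ, hφ, α, -, hα⟩ := exists_subseq_jsm hl (fun i : Fin l => z i) fun i => hn _ (hz i)
    refine ⟨_, _, fun i => hs _ (hz i) φ hφ, hα, fun a => ?_⟩
    exact tendsto_nhds_unique (hα.tendsto_one a)
      ((generatesAsymptoticModel_iff.1 hρ l a).comp (tendsto_comp_incFilter hφ l))
  obtain ⟨x', ν', hx', hν', hνν⟩ := transfer x ν hx hν
  obtain ⟨y', μ', hy', hμ', hμμ⟩ := transfer y μ hy hμ
  obtain ⟨A, B, hA, hB, hAB, hle⟩ := h l x' y' hx' hy' ν' μ' hν' hμ'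
  have hle' : ∀ a : Fin l → ℝ, (1 / A) * μ l a ≤ ν l a ∧ ν l a ≤ B * μ l a := by
    intro a
    rw [← hνν, ← hμμ]
    exact hle 1 _
  have norm1 : ∀ (z : ℕ → ℕ → X) (ρ : ∀ l : ℕ, (Fin l → ℝ) → ℝ), (∀ i, z i ∈ F) →
      GeneratesAsymptoticModel z ρ → ρ l (Pi.single ⟨0, hl⟩ 1) = 1 := by
    intro z ρ hz hρ
    refine tendsto_nhds_unique (generatesAsymptoticModel_iff.1 hρ l _)
      (tendsto_const_nhds.congr fun j => ?_)
    rw [Finset.sum_eq_single ⟨0, hl⟩]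
    · simp [hn _ (hz _) _]
    · intro i _ hi
      simp [hi]
    · simp
  have h1 := hle' (Pi.single ⟨0, hl⟩ 1)
  rw [norm1 x ν hx hν, norm1 y μ hy hμ, mul_one, mul_one, div_le_one hA] at h1
  have hAC : A ≤ C := by nlinarith [h1.1, h1.2]
  have hBC : B ≤ C := by nlinarith [h1.1, h1.2]
  obtain ⟨h2, h3⟩ := hle' a
  have hμ0 := hμ.nonneg l a
  exact ⟨le_trans (by gcongr) h2, h3.trans (by gcongr)⟩

/-- Uniqueness of asymptotic models is automatically uniform: all of them are equivalent, with a
common constant, to a fixed spreading model `ω`. Otherwise the rows of arrays violating the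
constants `1, 2, 3, ...` can be merged into one array (row `i` of the `n`-th array being placed at
position `Nat.pair n i`). Any asymptotic model of the merged array contains the violating models as
subsequences, and cannot be equivalent to `ω`, as `ω` is equal to each of its subsequences. -/
theorem exists_uniform_of_uniqueAM {F : Set (ℕ → X)} (hn : ∀ x ∈ F, Normalized x)
    (hs : ∀ x ∈ F, ∀ φ : ℕ → ℕ, StrictMono φ → x ∘ φ ∈ F) (h : UniqueAM F) {z : ℕ → X}
    (hz : z ∈ F) :
    ∃ (ω : ∀ l : ℕ, (Fin l → ℝ) → ℝ) (K : ℝ), 1 ≤ K ∧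
      ∀ (x : ℕ → ℕ → X) (ν : ∀ l : ℕ, (Fin l → ℝ) → ℝ), (∀ i, x i ∈ F) →
        GeneratesAsymptoticModel x ν →
        ∀ (m : ℕ) (a : Fin m → ℝ), ν m a ≤ K * ω m a ∧ ω m a ≤ K * ν m a := by
  obtain ⟨θ, hθ, ω, hω⟩ := exists_subseq_asymptoticModel (fun _ => z) fun _ => hn z hz
  refine ⟨ω, ?_⟩
  by_contra hcon
  have hbad : ∀ n : ℕ, ∃ (x : ℕ → ℕ → X) (ν : ∀ l : ℕ, (Fin l → ℝ) → ℝ), (∀ i, x i ∈ F) ∧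
      GeneratesAsymptoticModel x ν ∧ ∃ (m : ℕ) (a : Fin m → ℝ),
        ¬ (ν m a ≤ ((n : ℝ) + 1) * ω m a ∧ ω m a ≤ ((n : ℝ) + 1) * ν m a) := by
    intro n
    by_contra hgood
    refine hcon ⟨(n : ℝ) + 1, by simp, fun x ν hx hν m a => ?_⟩
    by_contra hna
    exact hgood ⟨x, ν, hx, hν, m, a, hna⟩
  choose x ν hx hν m a hna using hbad
  obtain ⟨φ, hφ, β, hβ⟩ := exists_subseq_asymptoticModel
    (fun p => x p.unpair.1 p.unpair.2) fun p => hn _ (hx _ _)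
  obtain ⟨C, -, A, B, hA, hB, -, hle⟩ := h _ _ (fun p => hs _ (hx _ _) φ hφ)
    (fun _ => hs z hz θ hθ) β ω hβ hω
  obtain ⟨n, hnA⟩ := exists_nat_ge (max A B)
  have hnA' : A ≤ (n : ℝ) + 1 := by linarith [le_max_left A B]
  have hnB' : B ≤ (n : ℝ) + 1 := by linarith [le_max_right A B]
  let q : Fin (m n) → Fin (Nat.pair n (m n)) :=
    fun i => ⟨Nat.pair n i, Nat.pair_lt_pair_right n i.isLt⟩
  have hq : StrictMono q := fun i i' hi => Nat.pair_lt_pair_right n hi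
  have e1 := asymptoticModel_extend_eq (hν n) hβ hq hφ (by intro i; simp [q]) (a n)
  have e2 := asymptoticModel_extend_eq hω hω hq strictMono_id (by intro i; rfl) (a n)
  obtain ⟨h1, h2⟩ := hle _ (Function.extend q (a n) 0)
  rw [e1, e2] at h1 h2
  rw [one_div, inv_mul_le_iff₀ hA] at h1
  exact hna n ⟨h2.trans (mul_le_mul_of_nonneg_right hnB' (hω.nonneg _ _)),
    h1.trans (mul_le_mul_of_nonneg_right hnA' ((hν n).nonneg _ _))⟩

/-- The passage from asymptotic models to joint spreading models: a joint spreading model of an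
`l`-array is an asymptotic model of its periodic repetition. -/
theorem uniqueJSM_of_uniqueAM {F : Set (ℕ → X)} (hn : ∀ x ∈ F, Normalized x)
    (hs : ∀ x ∈ F, ∀ φ : ℕ → ℕ, StrictMono φ → x ∘ φ ∈ F) (h : UniqueAM F) : UniqueJSM F := by
  -- For `l = 0` both models vanish, so any constant `C ≥ 1` works.
  have hzero : ∀ (x : Fin 0 → ℕ → X) (ν : ∀ k, (Fin 0 → Fin k → ℝ) → ℝ), GeneratesJSM 0 x ν →
      ∀ k a, ν k a = 0 := fun x ν hν k a =>
    tendsto_nhds_unique (generatesJSM_iff.1 hν k a) (by simp)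
  have hl0 : ∀ C : ℝ, 1 ≤ C → ∀ (x y : Fin 0 → ℕ → X) (ν μ : ∀ k, (Fin 0 → Fin k → ℝ) → ℝ),
      GeneratesJSM 0 x ν → GeneratesJSM 0 y μ → ∃ A B : ℝ, 0 < A ∧ 0 < B ∧ A * B ≤ C ∧
        ∀ (k : ℕ) (a : Fin 0 → Fin k → ℝ), (1 / A) * μ k a ≤ ν k a ∧ ν k a ≤ B * μ k a := by
    intro C hC x y ν μ hν hμ
    refine ⟨1, 1, one_pos, one_pos, by simpa using hC, fun k a => ?_⟩
    simp [hzero x ν hν, hzero y μ hμ]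
  rcases F.eq_empty_or_nonempty with rfl | ⟨z, hz⟩
  · refine ⟨1, le_rfl, fun l x y hx hy ν μ hν hμ => ?_⟩
    rcases Nat.eq_zero_or_pos l with rfl | hl
    · exact hl0 1 le_rfl x y ν μ hν hμ
    · exact absurd (hx ⟨0, hl⟩) (Set.notMem_empty _)
  obtain ⟨ω, K, hK, hω⟩ := exists_uniform_of_uniqueAM hn hs h hz
  have hK0 : 0 < K := by linarith
  have hKK : 1 ≤ K * K := by nlinarith
  refine ⟨(K * K) * (K * K), by nlinarith, fun l x y hx hy ν μ hν hμ => ?_⟩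
  rcases Nat.eq_zero_or_pos l with rfl | hl
  · exact hl0 _ (by nlinarith) x y ν μ hν hμ
  have transfer : ∀ (w : Fin l → ℕ → X) (ρ : ∀ k, (Fin l → Fin k → ℝ) → ℝ), (∀ i, w i ∈ F) →
      GeneratesJSM l w ρ → ∀ k a, ρ k a ≤ K * ω (k * l) (flattenCoeff a) ∧
        ω (k * l) (flattenCoeff a) ≤ K * ρ k a := by
    intro w ρ hw hρ k a
    obtain ⟨φ, hφ, α, hα, hα'⟩ := exists_subseq_jsm hl w fun i => hn _ (hw i)
    rw [(hρ.comp hφ).unique hα' k a]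
    exact hω _ α (fun p => hs _ (hw _) φ hφ) hα _ _
  refine ⟨K * K, K * K, by positivity, by positivity, le_rfl, fun k a => ?_⟩
  obtain ⟨h1, h2⟩ := transfer x ν hx hν k a
  obtain ⟨h3, h4⟩ := transfer y μ hy hμ k a
  constructor
  · rw [one_div, inv_mul_le_iff₀ (by positivity), mul_assoc]
    exact h3.trans (mul_le_mul_of_nonneg_left h2 hK0.le)
  · rw [mul_assoc]
    exact h1.trans (mul_le_mul_of_nonneg_left h4 hK0.le)

end Uniqueness

/-- Let `X` be a Banach space and `F` be either the collection of all
normalized weakly null Schauder basic sequences in `X`, or (if `X` has a basis) the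
collection of all normalized block sequences in `X`.  Then `X` admits a unique joint
spreading model with respect to `F` iff it admits a unique asymptotic model with
respect to `F`. -/
theorem statement4 (X : Type*) [NormedAddCommGroup X] [NormedSpace ℝ X]
    [CompleteSpace X] (F : Set (ℕ → X))
    (hF : F = {x | Normalized x ∧ WeaklyNull x ∧ IsBasicSeq x} ∨
      ∃ e : ℕ → X, IsSchauderBasis e ∧ F = {x | Normalized x ∧ IsBlockSeq e x}) :
    UniqueJSM F ↔ UniqueAM F := by
  have hn : ∀ x ∈ F, Normalized x := by
    rcases hF with rfl | ⟨e, -, rfl⟩ <;> exact fun x hx => hx.1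
  have hs : ∀ x ∈ F, ∀ φ : ℕ → ℕ, StrictMono φ → x ∘ φ ∈ F := by
    rcases hF with rfl | ⟨e, -, rfl⟩
    · exact fun x hx φ hφ => ⟨fun i => hx.1 _, fun f => (hx.2.1 f).comp hφ.tendsto_atTop,
        hx.2.2.comp hφ⟩
    · exact fun x hx φ hφ => ⟨fun i => hx.1 _, hx.2.comp hφ⟩
  exact ⟨uniqueAM_of_uniqueJSM hn hs, uniqueJSM_of_uniqueAM hn hs⟩
end

section
/- Let j_0 ∈ ℕ, ε > 0, let x = Σ_{r∈F} c_r e_r be an (n_{j_0}−1, ε)-basic special convex combination, and let x̃ = m_{j_0}·x. Let j_1,...,j_l ∈ ℕ with max{j_1,...,j_l} ≠ j_0, let G ∈ S_{n_{j_1}+...+n_{j_l}}*A_3, and let f = (1/(m_{j_1}···m_{j_l})) Σ_{i∈G} e_i^*. Then |f(x̃)| ≤ max{2ε·m_{j_0}, m_{j_0}/m_{j_0+1}, 1/m_{j_0}}. -/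
/-!
Write `x(A) = ∑_{i ∈ A} x i`, so that `f(x̃) = (m_{j₀} / ∏ m_{j_i}) x(G)`, where `x(G) ≤ 1`.

* If some `j_i > j₀`, then `∏ m_{j_i} ≥ m_{j₀+1}` and `f(x̃) ≤ m_{j₀} / m_{j₀+1}`.
* If all `j_i < j₀` and `∏ m_{j_i} ≥ m_{j₀}²`, then `f(x̃) ≤ 1 / m_{j₀}`.
* If all `j_i < j₀` and `∏ m_{j_i} < m_{j₀}²`, the growth condition on `(n_j)` gives
  `N := ∑ n_{j_i} ≤ n_{j₀} - 2`. A set `G ∈ S_N * A_3` is a union of three sets of `S_N`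
  (`exists_three_of_famStar`): the minima of the pieces, and two spreads of this set of minima.
  Intersected with the support set of `x`, each of them lies in `S_{n_{j₀}-2}`, hence has
  `x`-mass less than `ε`. So `x(G) ≤ 3ε ≤ 2ε ∏ m_{j_i}`, as every `m_j ≥ 2`.

The last case rests on three properties of the Schreier families: they are spreading
(`schreier_spread`), hereditary (`schreier_hereditary`) and increasing (`schreier_mono`). The
last two hold only from index `1` on: `S_0` omits `∅`, and `{0} ∈ S_0` is in no later family.
-/

open Filter Topology
open scoped ENNReal

theorem schreier_spread (n : ℕ) (F : Finset ℕ) (hF : F ∈ Schreier n) (g : ℕ → ℕ)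
    (hg : StrictMonoOn g F) (hge : ∀ i ∈ F, i ≤ g i) : F.image g ∈ Schreier n := by
  induction n generalizing F with
  | zero =>
    obtain ⟨i, rfl⟩ := hF
    exact ⟨g i, by simp⟩
  | succ n ih =>
    obtain ⟨d, H, hH, hlt, hd, rfl⟩ := hF
    have hsub : ∀ k, ∀ i ∈ H k, i ∈ Finset.univ.biUnion H := fun k i hi =>
      Finset.mem_biUnion.2 ⟨k, Finset.mem_univ _, hi⟩
    refine ⟨d, fun k => (H k).image g, fun k => ih _ (hH k) ?_ ?_, ?_, ?_, ?_⟩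
    · exact hg.mono fun i hi => hsub k i hi
    · exact fun i hi => hge i (hsub k i hi)
    · intro k l hkl i hi j hj
      obtain ⟨a, ha, rfl⟩ := Finset.mem_image.1 hi
      obtain ⟨b, hb, rfl⟩ := Finset.mem_image.1 hj
      exact hg (hsub k a ha) (hsub l b hb) (hlt k l hkl a ha b hb)
    · intro i hi
      obtain ⟨a, ha, rfl⟩ := Finset.mem_image.1 hi
      exact (hd a ha).trans (hge a ha)
    · ext i
      simp only [Finset.mem_image, Finset.mem_biUnion, Finset.mem_univ, true_and]
      constructor
      · rintro ⟨a, ⟨k, hk⟩, rfl⟩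
        exact ⟨k, a, hk, rfl⟩
      · rintro ⟨k, a, hk, rfl⟩
        exact ⟨a, ⟨k, hk⟩, rfl⟩

theorem mem_schreier_one (F : Finset ℕ) : F ∈ Schreier 1 ↔ ∀ i ∈ F, F.card ≤ i := by
  constructor
  · rintro ⟨d, H, hH, -, hd, rfl⟩ i hi
    refine le_trans ?_ (hd i hi)
    have hc : ∀ k ∈ (Finset.univ : Finset (Fin d)), (H k).card ≤ 1 := fun k _ => by
      obtain ⟨a, ha⟩ := hH k
      simp [ha]
    simpa using Finset.card_biUnion_le_card_mul _ H 1 hc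
  · intro h
    refine ⟨F.card, fun k => {F.orderEmbOfFin rfl k}, fun k => ⟨_, rfl⟩, ?_, h, ?_⟩
    · intro k l hkl i hi j hj
      rw [Finset.mem_singleton] at hi hj
      subst hi hj
      exact (F.orderEmbOfFin rfl).strictMono hkl
    · ext i
      simp only [Finset.mem_biUnion, Finset.mem_univ, true_and, Finset.mem_singleton]
      rw [← Finset.mem_coe, ← Finset.range_orderEmbOfFin F rfl, Set.mem_range]
      exact exists_congr fun _ => eq_comm

theorem schreier_hereditary (n : ℕ) (F F' : Finset ℕ) (hF : F ∈ Schreier (n + 1))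
    (h : F' ⊆ F) : F' ∈ Schreier (n + 1) := by
  induction n generalizing F F' with
  | zero =>
    rw [zero_add, mem_schreier_one] at *
    exact fun i hi => (Finset.card_le_card h).trans (hF i (h hi))
  | succ n ih =>
    obtain ⟨d, H, hH, hlt, hd, rfl⟩ := hF
    refine ⟨d, fun k => H k ∩ F', fun k => ih _ _ (hH k) Finset.inter_subset_left, ?_,
      fun i hi => hd i (h hi), ?_⟩
    · intro k l hkl i hi j hj
      exact hlt k l hkl i (Finset.mem_inter.1 hi).1 j (Finset.mem_inter.1 hj).1
    · rw [← Finset.biUnion_inter, Finset.inter_eq_right.2 h]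

theorem schreier_mono {n k : ℕ} (hnk : n ≤ k) (F : Finset ℕ) (hF : F ∈ Schreier (n + 1)) :
    F ∈ Schreier (k + 1) := by
  induction k, hnk using Nat.le_induction with
  | base => exact hF
  | succ k _ ih =>
    refine ⟨1, fun _ => F, fun _ => ih, ?_, ?_, by simp⟩
    · intro a b hab
      exact absurd hab (by simp [Subsingleton.elim a b])
    · intro i hi
      -- `0` belongs to no set of `S_{k+1}`: the number of pieces is at most the minimum.
      obtain ⟨d, H, -, -, hd, rfl⟩ := ih
      obtain ⟨a, -, -⟩ := Finset.mem_biUnion.1 hi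
      have := hd i hi
      have := a.2
      omega

/-- Elements `b` and `c` exhausting, together with the minimum, a set of at most three
elements; repetitions are allowed. -/
theorem exists_three (A : Finset ℕ) (hA : A.card ≤ 3) (hne : A.Nonempty) :
    ∃ b ∈ A, ∃ c ∈ A, A ⊆ {finsetMin A, b, c} := by
  have hmin : finsetMin A ∈ A := by
    rw [finsetMin, dif_pos hne]
    exact A.min'_mem hne
  have hcard : (A.erase (finsetMin A)).card ≤ 2 := by
    rw [Finset.card_erase_of_mem hmin]
    omega
  have hmem : ∀ i ∈ A.erase (finsetMin A), i ∈ A := fun i hi => Finset.mem_of_mem_erase hi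
  have hins := Finset.insert_erase hmin
  set m := finsetMin A
  obtain h | h | h : (A.erase m).card = 0 ∨ (A.erase m).card = 1 ∨ (A.erase m).card = 2 := by
    omega
  · rw [Finset.card_eq_zero] at h
    exact ⟨m, hmin, m, hmin, by rw [← hins, h]; simp⟩
  · obtain ⟨b, h⟩ := Finset.card_eq_one.1 h
    exact ⟨b, hmem b (by simp [h]), b, hmem b (by simp [h]), by rw [← hins, h]; simp⟩
  · obtain ⟨b, c, -, h⟩ := Finset.card_eq_two.1 h
    exact ⟨b, hmem b (by simp [h]), c, hmem c (by simp [h]), by rw [← hins, h]⟩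

/-- A set in `S_n * A_3` is covered by three sets of `S_n`. -/
theorem exists_three_of_famStar (n : ℕ) (G : Finset ℕ)
    (hG : G ∈ famStar (Schreier n) (SchreierA 3)) :
    ∃ A ∈ Schreier n, ∃ B ∈ Schreier n, ∃ C ∈ Schreier n, G ⊆ A ∪ B ∪ C := by
  obtain ⟨d, H, hH, hne, hlt, hA, rfl⟩ := hG
  have hmin : ∀ k, finsetMin (H k) ∈ H k := fun k => by
    rw [finsetMin, dif_pos (hne k)]
    exact (H k).min'_mem _
  have hle : ∀ k, ∀ i ∈ H k, finsetMin (H k) ≤ i := fun k i hi => by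
    rw [finsetMin, dif_pos (hne k)]
    exact (H k).min'_le _ hi
  have hinj : StrictMono fun k => finsetMin (H k) := fun k l hkl =>
    hlt k l hkl _ (hmin k) _ (hmin l)
  choose b hb c hc hsub using fun k => exists_three (H k) (hH k) (hne k)
  -- A selector of `(H k)` is a spread of the sequence of minima.
  have key : ∀ s : Fin d → ℕ, (∀ k, s k ∈ H k) → Finset.univ.image s ∈ Schreier n := by
    intro s hs
    have hext : ∀ k, Function.extend (fun k => finsetMin (H k)) s 0 (finsetMin (H k)) = s k :=
      fun k => hinj.injective.extend_apply s 0 k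
    have := schreier_spread n _ hA (Function.extend (fun k => finsetMin (H k)) s 0) ?_ ?_
    · rw [Finset.image_image] at this
      convert this using 2
      ext k
      exact (hext k).symm
    · intro i hi j hj hij
      obtain ⟨k, -, rfl⟩ := Finset.mem_image.1 (Finset.mem_coe.1 hi)
      obtain ⟨l, -, rfl⟩ := Finset.mem_image.1 (Finset.mem_coe.1 hj)
      rw [hext, hext]
      exact hlt k l (hinj.lt_iff_lt.1 hij) _ (hs k) _ (hs l)
    · intro i hi
      obtain ⟨k, -, rfl⟩ := Finset.mem_image.1 hi
      rw [hext]
      exact hle k _ (hs k)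
  refine ⟨_, hA, _, key b hb, _, key c hc, ?_⟩
  intro i hi
  obtain ⟨k, -, hk⟩ := Finset.mem_biUnion.1 hi
  have := hsub k hk
  simp only [Finset.mem_insert, Finset.mem_singleton] at this
  simp only [Finset.mem_union, Finset.mem_image, Finset.mem_univ, true_and]
  rcases this with h | h | h
  · exact Or.inl (Or.inl ⟨k, h.symm⟩)
  · exact Or.inl (Or.inr ⟨k, h.symm⟩)
  · exact Or.inr ⟨k, h.symm⟩

theorem evalPair_indicator (c a : ℝ) (G : Finset ℕ) (x : c00) :
    evalPair (c • ∑ i ∈ G, Finsupp.single i (1 : ℝ)) (a • x) = c * (a * ∑ i ∈ G, x i) := by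
  unfold evalPair
  rw [Finsupp.sum_smul_index (by simp), ← Finsupp.sum_finsetSum_index (by simp)
    (by intros; ring)]
  simp [Finset.mul_sum]

/-- Let `x = ∑_{r∈F} c_r e_r` be an `(n_{j₀} − 1, ε)`-basic s.c.c. and
`x̃ = m_{j₀} • x`.  Let `j_1, …, j_l` with `max j_i ≠ j₀`, `G ∈ S_{n_{j_1}+⋯+n_{j_l}} * A_3`
and `f = (1/(m_{j_1}⋯m_{j_l})) ∑_{i∈G} e_i^*`.  Then
`|f(x̃)| ≤ max {2ε m_{j₀}, m_{j₀}/m_{j₀+1}, 1/m_{j₀}}`. -/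
theorem statement6 (P : IWParams) (j0 : ℕ) (ε : ℝ) (hε : 0 < ε) (x : c00)
    (hx : IsBasicSCC (P.n j0 - 1) ε x)
    (l : ℕ) (hl : 0 < l) (js : Fin l → ℕ) (hmax : Finset.univ.sup js ≠ j0)
    (G : Finset ℕ) (hG : G ∈ famStar (Schreier (∑ i, P.n (js i))) (SchreierA 3)) :
    |evalPair (((∏ i, P.m (js i) : ℕ) : ℝ)⁻¹ • ∑ i ∈ G, Finsupp.single i (1 : ℝ))
        ((P.m j0 : ℝ) • x)| ≤
      max (max (2 * ε * (P.m j0 : ℝ)) ((P.m j0 : ℝ) / (P.m (j0 + 1) : ℝ)))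
        (1 / (P.m j0 : ℝ)) := by
  classical
  obtain ⟨F, hxF, -, hx0, hsum, hscc⟩ := hx
  rw [evalPair_indicator]
  have hm2 : ∀ j, 2 ≤ P.m j := fun j => P.m_first ▸ P.m_mono.monotone (Nat.zero_le j)
  have hn1 : ∀ j, 1 ≤ P.n j := fun j => P.n_first ▸ P.n_mono.monotone (Nat.zero_le j)
  have hp1 : 1 ≤ ∏ i, P.m (js i) :=
    Finset.one_le_prod' fun i _ => (by norm_num : 1 ≤ 2).trans (hm2 _)
  have hdvd : ∀ i, P.m (js i) ≤ ∏ i, P.m (js i) := fun i =>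
    Nat.le_of_dvd hp1 (Finset.dvd_prod_of_mem _ (Finset.mem_univ i))
  have hp2 : 2 ≤ ∏ i, P.m (js i) := (hm2 _).trans (hdvd ⟨0, hl⟩)
  -- The mass of a set is carried by its part in `F`.
  have hinter : ∀ A : Finset ℕ, ∑ i ∈ A, x i = ∑ i ∈ F ∩ A, x i := by
    intro A
    symm
    refine Finset.sum_subset Finset.inter_subset_right fun i hi hi' => ?_
    by_contra hne
    exact hi' (Finset.mem_inter.2 ⟨hxF (Finsupp.mem_support_iff.2 hne), hi⟩)
  have hG0 : 0 ≤ ∑ i ∈ G, x i := Finset.sum_nonneg fun i _ => hx0 i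
  have hG1 : ∑ i ∈ G, x i ≤ 1 := by
    rw [hinter, ← hsum]
    exact Finset.sum_le_sum_of_subset_of_nonneg Finset.inter_subset_left fun i _ _ => hx0 i
  generalize hp : ∏ i, P.m (js i) = p at *
  have hpR : (2 : ℝ) ≤ p := by exact_mod_cast hp2
  have hmR : (2 : ℝ) ≤ P.m j0 := by exact_mod_cast hm2 j0
  have hmR' : (2 : ℝ) ≤ P.m (j0 + 1) := by exact_mod_cast hm2 (j0 + 1)
  generalize hS : ∑ i ∈ G, x i = S at *
  rw [abs_of_nonneg (by positivity),
    show (p : ℝ)⁻¹ * (P.m j0 * S) = P.m j0 * S / p by ring]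
  rcases lt_or_gt_of_ne hmax with hlt | hgt
  · obtain ⟨j, rfl⟩ : ∃ j, j0 = j + 1 := ⟨j0 - 1, by omega⟩
    have hjs : ∀ i, js i ≤ j := fun i =>
      Nat.lt_succ_iff.1 ((Finset.le_sup (f := js) (Finset.mem_univ i)).trans_lt hlt)
    rcases lt_or_ge p (P.m (j + 1) ^ 2) with hsmall | hbig
    · have hN := P.growth_sum l js j hjs (hp ▸ hsmall)
      have hN1 : 1 ≤ ∑ i, P.n (js i) :=
        (hn1 _).trans (Finset.single_le_sum (f := fun i => P.n (js i))
          (fun _ _ => Nat.zero_le _) (Finset.mem_univ (⟨0, hl⟩ : Fin l)))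
      obtain ⟨A, hA, B, hB, C, hC, hsub⟩ := exists_three_of_famStar _ G hG
      obtain ⟨N, hNe⟩ : ∃ N, ∑ i, P.n (js i) = N + 1 := ⟨_, (Nat.sub_add_cancel hN1).symm⟩
      obtain ⟨M, hMe⟩ : ∃ M, P.n (j + 1) = M + 3 := ⟨P.n (j + 1) - 3, by omega⟩
      rw [hNe] at hA hB hC hN
      rw [show P.n (j + 1) - 1 - 1 = M + 1 by omega] at hscc
      have key : ∀ D ∈ Schreier (N + 1), ∑ i ∈ D, x i ≤ ε := by
        intro D hD
        rw [hinter]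
        exact (hscc _ Finset.inter_subset_left (schreier_mono (by omega) _
          (schreier_hereditary _ _ _ hD Finset.inter_subset_right))).le
      have hunion : ∀ D E : Finset ℕ,
          ∑ i ∈ D ∪ E, x i ≤ ∑ i ∈ D, x i + ∑ i ∈ E, x i := fun D E => by
        rw [← Finset.sum_union_inter]
        exact le_add_of_nonneg_right (Finset.sum_nonneg fun i _ => hx0 i)
      have h3 : S ≤ 3 * ε := by
        have h1 : S ≤ ∑ i ∈ A ∪ B ∪ C, x i :=
          hS ▸ Finset.sum_le_sum_of_subset_of_nonneg hsub fun i _ _ => hx0 i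
        linarith [hunion (A ∪ B) C, hunion A B, key A hA, key B hB, key C hC]
      refine le_max_of_le_left (le_max_of_le_left ?_)
      rw [div_le_iff₀ (by positivity)]
      have h4 : S ≤ 2 * ε * p := by nlinarith
      nlinarith
    · refine le_max_of_le_right ?_
      have hbigR : (P.m (j + 1) : ℝ) ^ 2 ≤ p := by exact_mod_cast hbig
      rw [div_le_div_iff₀ (by positivity) (by positivity)]
      nlinarith
  · refine le_max_of_le_left (le_max_of_le_right ?_)
    obtain ⟨i, -, hi⟩ := (Finset.lt_sup_iff).1 hgt
    have hle : P.m (j0 + 1) ≤ p := (P.m_mono.monotone hi).trans (hdvd i)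
    have hleR : (P.m (j0 + 1) : ℝ) ≤ p := by exact_mod_cast hle
    exact div_le_div₀ (by positivity) (by nlinarith) (by positivity) hleR
end
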